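/- Let a: ℝ² → ℝ (variables x,z) be smooth with a_z > 0 everywhere and satisfying a_{xxz} = 3a_{xz}²/(4a_z) − a_x a_z for all (x,z). Then the function a_z^{−3/2}(a_z a_{xzz} − a_{xz} a_{zz}) + (2/3) a_z^{3/2} is independent of x, i.e., its partial derivative with respect to x vanishes identically. -/

import Mathlib

/-!
Write `u = a_z` and `Q = u u_{xz} - u_x u_z`, so that `tzF a = u^{-3/2} Q + (2/3) u^{3/2}`.
Since mixed partial derivatives commute, the hypothesis reads `u_xx = 3 u_x² / (4u) - a_x u`, and
`Q_x = u u_{xxz} - u_{xx} u_z`. Differentiating the hypothesis in `z` (`pdz_heq`) and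
substituting, the terms in `a_x` cancel and `Q_x = (3/2) (u_x / u) Q - u_x u²`. Hence
`(u^{-3/2} Q)_x = -u^{1/2} u_x`, which is cancelled by the derivative of `(2/3) u^{3/2}`.
-/

noncomputable section

/-- Partial derivative in the first variable (x). -/
def pdx (f : ℝ → ℝ → ℝ) : ℝ → ℝ → ℝ := fun x z => deriv (fun x' => f x' z) x

/-- Partial derivative in the second variable (z). -/
def pdz (f : ℝ → ℝ → ℝ) : ℝ → ℝ → ℝ := fun x z => deriv (fun z' => f x z') z

/-- The quantity `a_z^{-3/2}(a_z a_{xzz} - a_{xz} a_{zz}) + (2/3) a_z^{3/2}`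
(real powers, meaningful since `a_z > 0`). -/
def tzF (a : ℝ → ℝ → ℝ) : ℝ → ℝ → ℝ := fun x z =>
  pdz a x z ^ (-(3 / 2 : ℝ)) *
      (pdz a x z * pdz (pdz (pdx a)) x z - pdz (pdx a) x z * pdz (pdz a) x z)
    + (2 / 3) * pdz a x z ^ ((3 / 2 : ℝ))

theorem hasFDerivAt_uncurry {f : ℝ → ℝ → ℝ}
    (hf : ContDiff ℝ (⊤ : ℕ∞) (Function.uncurry f)) (p : ℝ × ℝ) :
    HasFDerivAt (Function.uncurry f) (fderiv ℝ (Function.uncurry f) p) p :=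
  ((hf.differentiable (by simp)) p).hasFDerivAt

theorem hasDerivAt_x_fderiv {f : ℝ → ℝ → ℝ}
    (hf : ContDiff ℝ (⊤ : ℕ∞) (Function.uncurry f)) (x z : ℝ) :
    HasDerivAt (fun x' => f x' z) (fderiv ℝ (Function.uncurry f) (x, z) (1, 0)) x :=
  HasFDerivAt.comp_hasDerivAt (f := fun x' => (x', z)) x (hasFDerivAt_uncurry hf (x, z))
    ((hasDerivAt_id x).prodMk (hasDerivAt_const x z))

theorem hasDerivAt_z_fderiv {f : ℝ → ℝ → ℝ}
    (hf : ContDiff ℝ (⊤ : ℕ∞) (Function.uncurry f)) (x z : ℝ) :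
    HasDerivAt (fun z' => f x z') (fderiv ℝ (Function.uncurry f) (x, z) (0, 1)) z :=
  HasFDerivAt.comp_hasDerivAt (f := fun z' => (x, z')) z (hasFDerivAt_uncurry hf (x, z))
    ((hasDerivAt_const z x).prodMk (hasDerivAt_id z))

theorem uncurry_pdx {f : ℝ → ℝ → ℝ} (hf : ContDiff ℝ (⊤ : ℕ∞) (Function.uncurry f)) :
    Function.uncurry (pdx f) = fun p => fderiv ℝ (Function.uncurry f) p (1, 0) := by
  funext ⟨x, z⟩
  exact (hasDerivAt_x_fderiv hf x z).deriv

theorem uncurry_pdz {f : ℝ → ℝ → ℝ} (hf : ContDiff ℝ (⊤ : ℕ∞) (Function.uncurry f)) :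
    Function.uncurry (pdz f) = fun p => fderiv ℝ (Function.uncurry f) p (0, 1) := by
  funext ⟨x, z⟩
  exact (hasDerivAt_z_fderiv hf x z).deriv

theorem contDiff_pdx {f : ℝ → ℝ → ℝ} (hf : ContDiff ℝ (⊤ : ℕ∞) (Function.uncurry f)) :
    ContDiff ℝ (⊤ : ℕ∞) (Function.uncurry (pdx f)) := by
  rw [uncurry_pdx hf]
  exact (hf.fderiv_right (m := (⊤ : ℕ∞)) (by simp)).clm_apply contDiff_const

theorem contDiff_pdz {f : ℝ → ℝ → ℝ} (hf : ContDiff ℝ (⊤ : ℕ∞) (Function.uncurry f)) :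
    ContDiff ℝ (⊤ : ℕ∞) (Function.uncurry (pdz f)) := by
  rw [uncurry_pdz hf]
  exact (hf.fderiv_right (m := (⊤ : ℕ∞)) (by simp)).clm_apply contDiff_const

theorem hasDerivAt_pdx {f : ℝ → ℝ → ℝ}
    (hf : ContDiff ℝ (⊤ : ℕ∞) (Function.uncurry f)) (x z : ℝ) :
    HasDerivAt (fun x' => f x' z) (pdx f x z) x :=
  (hasDerivAt_x_fderiv hf x z).differentiableAt.hasDerivAt

theorem hasDerivAt_pdz {f : ℝ → ℝ → ℝ}
    (hf : ContDiff ℝ (⊤ : ℕ∞) (Function.uncurry f)) (x z : ℝ) :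
    HasDerivAt (fun z' => f x z') (pdz f x z) z :=
  (hasDerivAt_z_fderiv hf x z).differentiableAt.hasDerivAt

/-- Mixed partial derivatives of a smooth function commute: both sides are values of the
symmetric second derivative. -/
theorem pdx_pdz_comm {f : ℝ → ℝ → ℝ} (hf : ContDiff ℝ (⊤ : ℕ∞) (Function.uncurry f)) :
    pdx (pdz f) = pdz (pdx f) := by
  funext x z
  have hd : DifferentiableAt ℝ (fderiv ℝ (Function.uncurry f)) (x, z) :=
    (hf.fderiv_right (m := (⊤ : ℕ∞)) (by simp)).differentiable (by simp) _
  have h1 : pdx (pdz f) x z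
      = fderiv ℝ (fderiv ℝ (Function.uncurry f)) (x, z) (1, 0) (0, 1) := by
    have h := congrFun (uncurry_pdx (contDiff_pdz hf)) (x, z)
    rw [uncurry_pdz hf, fderiv_clm_apply hd (differentiableAt_const _)] at h
    simpa using h
  have h2 : pdz (pdx f) x z
      = fderiv ℝ (fderiv ℝ (Function.uncurry f)) (x, z) (0, 1) (1, 0) := by
    have h := congrFun (uncurry_pdz (contDiff_pdx hf)) (x, z)
    rw [uncurry_pdx hf, fderiv_clm_apply hd (differentiableAt_const _)] at h
    simpa using h
  rw [h1, h2]
  refine hf.contDiffAt.isSymmSndFDerivAt ?_ (1, 0) (0, 1)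
  simp only [minSmoothness_of_isRCLikeNormedField]
  exact WithTop.coe_le_coe.2 (le_top : (2 : ℕ∞) ≤ ⊤)

/-- The `z`-derivative of the equation, which expresses `a_{xxzz}` through lower derivatives. -/
theorem pdz_heq {a : ℝ → ℝ → ℝ}
    (ha : ContDiff ℝ (⊤ : ℕ∞) (Function.uncurry a))
    (haz : ∀ x z, 0 < pdz a x z)
    (heq : ∀ x z, pdz (pdx (pdx a)) x z =
      3 * (pdz (pdx a) x z) ^ 2 / (4 * pdz a x z) - pdx a x z * pdz a x z) (x z : ℝ) :
    pdz (pdz (pdx (pdx a))) x z =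
      3 * pdz (pdx a) x z * pdz (pdz (pdx a)) x z / (2 * pdz a x z)
        - 3 * (pdz (pdx a) x z) ^ 2 * pdz (pdz a) x z / (4 * (pdz a x z) ^ 2)
        - pdz (pdx a) x z * pdz a x z - pdx a x z * pdz (pdz a) x z := by
  have hu := hasDerivAt_pdz (contDiff_pdz ha) x z
  have hp := hasDerivAt_pdz (contDiff_pdx ha) x z
  have hpz := hasDerivAt_pdz (contDiff_pdz (contDiff_pdx ha)) x z
  have hne := (haz x z).ne'
  have h := (((hpz.pow 2).const_mul 3).div (hu.const_mul 4) (by simpa using hne)).sub (hp.mul hu)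
  have h' : HasDerivAt (fun z' => pdz (pdx (pdx a)) x z') _ z :=
    h.congr_of_eventuallyEq (Filter.Eventually.of_forall fun z' => heq x z')
  rw [show pdz (pdz (pdx (pdx a))) x z = _ from h'.deriv]
  simp only [Pi.pow_apply]
  field_simp
  ring

theorem stmt9 (a : ℝ → ℝ → ℝ)
    (ha : ContDiff ℝ (⊤ : ℕ∞) (Function.uncurry a))
    (haz : ∀ x z, 0 < pdz a x z)
    (heq : ∀ x z, pdz (pdx (pdx a)) x z =
      3 * (pdz (pdx a) x z) ^ 2 / (4 * pdz a x z) - pdx a x z * pdz a x z) :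
    ∀ x z, pdx (tzF a) x z = 0 := by
  intro x z
  have hcomm := pdx_pdz_comm ha
  have hu := hasDerivAt_pdx (contDiff_pdz ha) x z
  have huz := hasDerivAt_pdx (contDiff_pdz (contDiff_pdz ha)) x z
  have hv := hasDerivAt_pdx (contDiff_pdz (contDiff_pdx ha)) x z
  have hvz := hasDerivAt_pdx (contDiff_pdz (contDiff_pdz (contDiff_pdx ha))) x z
  -- Move every `x`-derivative innermost, to match the form of the equation.
  rw [hcomm] at hu
  rw [pdx_pdz_comm (contDiff_pdz ha), hcomm] at huz
  rw [pdx_pdz_comm (contDiff_pdx ha)] at hv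
  rw [pdx_pdz_comm (contDiff_pdz (contDiff_pdx ha)), pdx_pdz_comm (contDiff_pdx ha)] at hvz
  have hpos := haz x z
  have hne := hpos.ne'
  have h := ((hu.rpow_const (p := -(3 / 2 : ℝ)) (Or.inl hne)).mul
    ((hu.mul hvz).sub (hv.mul huz))).add
    ((hu.rpow_const (p := (3 / 2 : ℝ)) (Or.inl hne)).const_mul (2 / 3))
  rw [show pdx (tzF a) x z = _ from h.deriv, pdz_heq ha haz heq x z, heq x z]
  -- Express all powers of `a_z` through `a_z ^ (-(3 / 2))`.
  have e1 : pdz a x z ^ (-(3 / 2 : ℝ) - 1) = pdz a x z ^ (-(3 / 2 : ℝ)) / pdz a x z := by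
    rw [Real.rpow_sub hpos, Real.rpow_one]
  have e2 : pdz a x z ^ ((3 / 2 : ℝ) - 1) = pdz a x z ^ (-(3 / 2 : ℝ)) * pdz a x z ^ 2 := by
    rw [← Real.rpow_natCast, ← Real.rpow_add hpos]
    norm_num
  simp only [Pi.mul_apply, Pi.sub_apply]
  rw [e1, e2]
  field_simp
  ring
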